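/- Let G be a C₅-free graph of maximum degree at most d (d ≥ 3), and let M be an induced matching of G that is maximal and stable under the local-search exchange operation. Then |M| ≥ m(G) / ((3/2)d² − d + 1/2). -/

import Mathlib

open Classical

variable {V : Type*}

/-- Two edges (as `Sym2 V`) are in conflict: they are at distance at most 2
in the line graph, i.e. they share a vertex or some edge of `G` joins them. -/
def Conflict (G : SimpleGraph V) (e f : Sym2 V) : Prop :=
  ∃ a ∈ e, ∃ b ∈ f, a = b ∨ G.Adj a b

/-- `C_G(e)`: the set of edges of `G` in conflict with `e` (including `e`). -/
def CSet (G : SimpleGraph V) (e : Sym2 V) : Set (Sym2 V) :=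
  {f | f ∈ G.edgeSet ∧ Conflict G e f}

/-- `PC_G(M, e)`: the private conflict edges of `e` with respect to `M`. -/
def PCSet (G : SimpleGraph V) (M : Set (Sym2 V)) (e : Sym2 V) : Set (Sym2 V) :=
  CSet G e \ ⋃ f ∈ M \ {e}, CSet G f

/-- `M` is an induced matching of `G`. -/
def IsInducedMatching (G : SimpleGraph V) (M : Set (Sym2 V)) : Prop :=
  M ⊆ G.edgeSet ∧ ∀ e ∈ M, ∀ f ∈ M, e ≠ f → ¬ Conflict G e f

/-- `M` is a maximal induced matching of `G`. -/
def IsMaximalInducedMatching (G : SimpleGraph V) (M : Set (Sym2 V)) : Prop :=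
  IsInducedMatching G M ∧ ∀ M', IsInducedMatching G M' → M ⊆ M' → M' = M

/-- `M` is stable under the local-search exchange operation: any two distinct
private conflict edges of an edge of `M` conflict with each other. -/
def LSStable (G : SimpleGraph V) (M : Set (Sym2 V)) : Prop :=
  ∀ e ∈ M, ∀ e' ∈ PCSet G M e, ∀ e'' ∈ PCSet G M e, e' ≠ e'' → e'' ∈ CSet G e'

/-- The edges of `G` with both endpoints in `S`. -/
def edgesWithin (G : SimpleGraph V) (S : Set V) : Set (Sym2 V) :=
  {e | e ∈ G.edgeSet ∧ ∀ a ∈ e, a ∈ S}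

/-- The edges of `G` with one endpoint in `S` and the other in `T`. -/
def edgesBetween (G : SimpleGraph V) (S T : Set V) : Set (Sym2 V) :=
  {e | e ∈ G.edgeSet ∧ ∃ a b : V, e = s(a, b) ∧ a ∈ S ∧ b ∈ T}

/-- `G` has no induced cycle of length 4. -/
def C4Free (G : SimpleGraph V) : Prop :=
  ¬ ∃ a b c d : V, G.Adj a b ∧ G.Adj b c ∧ G.Adj c d ∧ G.Adj d a ∧
      ¬ G.Adj a c ∧ ¬ G.Adj b d ∧ a ≠ c ∧ b ≠ d

/-- `G` has no induced cycle of length 5. -/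
def C5Free (G : SimpleGraph V) : Prop :=
  ¬ ∃ a b c d e : V, G.Adj a b ∧ G.Adj b c ∧ G.Adj c d ∧ G.Adj d e ∧ G.Adj e a ∧
      ¬ G.Adj a c ∧ ¬ G.Adj a d ∧ ¬ G.Adj b d ∧ ¬ G.Adj b e ∧ ¬ G.Adj c e ∧
      a ≠ c ∧ a ≠ d ∧ b ≠ d ∧ b ≠ e ∧ c ≠ e

/-- `G` has no induced `K_{1,3}` (claw). -/
def ClawFree (G : SimpleGraph V) : Prop :=
  ¬ ∃ v a b c : V, G.Adj v a ∧ G.Adj v b ∧ G.Adj v c ∧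
      ¬ G.Adj a b ∧ ¬ G.Adj a c ∧ ¬ G.Adj b c ∧ a ≠ b ∧ a ≠ c ∧ b ≠ c

/-!
Let `uv ∈ M`, and let `A`, `B` be the remaining neighbours of `u` and of `v`, at most `d - 1` each.
By the double counting `∑ e ∈ M, (|C(e)| + |PC(e)|) ≥ 2 m(G)` it suffices to bound
`|C(uv)| + |PC(uv)|` by `3 d² - 2 d + 1`. The edges at `u` or `v` contribute at most `2 (2 d - 1)`.
Any other edge of `C(uv)` meets `A ∪ B`; an edge inside `A ∪ B` is paid for by its two ends, one
leaving `A ∪ B` by its only end there, which pays twice when the edge is private. If `x ∈ A \ B` and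
`y ∈ B \ A` both carry private edges leaving `A ∪ B`, then stability and the absence of an induced
`C₅` force `x` and `y` to be adjacent. So if `β` vertices of `B \ A` carry such edges, a vertex of
`A \ B` carries at most `d - 1 - β` of them, and the vertices of `A \ B` and `B \ A` together carry
at most `(d - 1) (d - 1 - β) + β (d - 1) = (d - 1)²`. As a vertex of `A ∪ B` meets at most `d - 1`
edges avoiding `u` and `v`, the remaining payments are at most
`(d - 1) (|A ∪ B| + |A ∩ B|) ≤ 2 (d - 1)²`.
-/

section Counting

variable {ι β : Type*}

/-- An element lying in two members of the family is counted twice by the cardinalities of the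
members, so only the elements of a single member need an extra term. -/
theorem card_biUnion_add_card_filter_le [DecidableEq ι] [DecidableEq β] (s : Finset ι)
    (I : ι → Finset β) (p : β → Prop) [DecidablePred p] :
    (s.biUnion I).card + {b ∈ s.biUnion I | p b}.card ≤
      ∑ i ∈ s, ((I i).card + {b ∈ I i | p b ∧ ∀ j ∈ s, b ∈ I j → j = i}.card) := by
  set U := s.biUnion I
  set J : ι → Finset β := fun i ↦ {b ∈ I i | p b ∧ ∀ j ∈ s, b ∈ I j → j = i}
  have card_eq_sum : ∀ T ⊆ U, T.card = ∑ b ∈ U, if b ∈ T then 1 else 0 := fun T hT ↦ by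
    rw [← Finset.card_filter, Finset.filter_mem_eq_inter, Finset.inter_eq_right.2 hT]
  have pointwise : ∀ b ∈ U, (1 + if p b then 1 else 0) ≤
      ∑ i ∈ s, ((if b ∈ I i then 1 else 0) + if b ∈ J i then 1 else 0) := fun b hb ↦ by
    obtain ⟨i, hi, hbi⟩ := Finset.mem_biUnion.1 hb
    by_cases hunique : ∀ j ∈ s, b ∈ I j → j = i
    · have hJ : b ∈ J i ↔ p b :=
        Finset.mem_filter.trans ⟨fun h ↦ h.2.1, fun h ↦ ⟨hbi, h, hunique⟩⟩
      refine le_trans ?_ (Finset.single_le_sum (fun _ _ ↦ Nat.zero_le _) hi)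
      simp only [hbi, hJ, if_true, le_refl]
    · push Not at hunique
      obtain ⟨j, hj, hbj, hji⟩ := hunique
      calc (1 + if p b then 1 else 0) ≤ 2 := by split_ifs <;> simp
        _ ≤ ∑ k ∈ {j, i}, ((if b ∈ I k then 1 else 0) + if b ∈ J k then 1 else 0) := by
          rw [Finset.sum_pair hji, if_pos hbi, if_pos hbj]
          lia
        _ ≤ _ := Finset.sum_le_sum_of_subset (by simp [Finset.insert_subset_iff, hi, hj])
  calc U.card + {b ∈ U | p b}.card = ∑ b ∈ U, (1 + if p b then 1 else 0) := by
        rw [Finset.sum_add_distrib, ← Finset.card_eq_sum_ones, ← Finset.card_filter]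
    _ ≤ _ := Finset.sum_le_sum pointwise
    _ = ∑ i ∈ s, ((I i).card + (J i).card) := by
        rw [Finset.sum_comm]
        refine Finset.sum_congr rfl fun i hi ↦ ?_
        have hI : I i ⊆ U := Finset.subset_biUnion_of_mem I hi
        rw [Finset.sum_add_distrib, card_eq_sum _ hI,
          card_eq_sum _ ((Finset.filter_subset _ _).trans hI)]

theorem sum_add_sum_le_sq {X Y : Finset ι} {w : ι → ℕ} {n : ℕ} (hX : X.card ≤ n) (hY : Y.card ≤ n)
    (hwY : ∀ y ∈ Y, w y ≤ n)
    (hwX : ∀ x ∈ X, w x ≠ 0 → w x + {y ∈ Y | w y ≠ 0}.card ≤ n) :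
    ∑ x ∈ X, w x + ∑ y ∈ Y, w y ≤ n ^ 2 := by
  set k := {y ∈ Y | w y ≠ 0}.card
  have hk : k ≤ n := (Finset.card_filter_le _ _).trans hY
  have sum_X : ∑ x ∈ X, w x ≤ n * (n - k) :=
    (Finset.sum_le_card_nsmul X w (n - k) fun x hx ↦ by specialize hwX x hx; lia).trans
      (Nat.mul_le_mul_right _ hX)
  have sum_Y : ∑ y ∈ Y, w y ≤ k * n := by
    rw [← Finset.sum_filter_ne_zero]
    exact Finset.sum_le_card_nsmul _ w n fun y hy ↦ hwY y (Finset.mem_filter.1 hy).1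
  calc ∑ x ∈ X, w x + ∑ y ∈ Y, w y ≤ n * (n - k) + n * k := by lia
    _ = n ^ 2 := by rw [← mul_add, Nat.sub_add_cancel hk, sq]

theorem sum_union_add_le_three_mul_sq [DecidableEq ι] {A B : Finset ι} {c w : ι → ℕ} {n : ℕ}
    (hA : A.card ≤ n) (hB : B.card ≤ n) (hwc : ∀ x, w x ≤ c x) (hc : ∀ x ∈ A ∪ B, c x ≤ n)
    (hw : ∀ x ∈ A \ B, w x ≠ 0 → w x + {y ∈ B \ A | w y ≠ 0}.card ≤ n) :
    ∑ x ∈ A ∪ B, (c x + w x) ≤ 3 * n ^ 2 := by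
  have sum_c : ∑ x ∈ A ∪ B, c x ≤ (A ∪ B).card * n := Finset.sum_le_card_nsmul _ _ _ hc
  have sum_inter : ∑ x ∈ A ∩ B, w x ≤ (A ∩ B).card * n :=
    Finset.sum_le_card_nsmul _ _ _ fun x hx ↦
      (hwc x).trans (hc x (Finset.inter_subset_union hx))
  have cards : (A ∪ B).card * n + (A ∩ B).card * n ≤ 2 * n ^ 2 := by
    rw [← add_mul, Finset.card_union_add_card_inter]
    nlinarith
  have sum_sdiff : ∑ x ∈ A \ B, w x + ∑ y ∈ B \ A, w y ≤ n ^ 2 :=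
    sum_add_sum_le_sq ((Finset.card_le_card Finset.sdiff_subset).trans hA)
      ((Finset.card_le_card Finset.sdiff_subset).trans hB)
      (fun y hy ↦ (hwc y).trans (hc y (Finset.mem_union_right _ (Finset.mem_sdiff.1 hy).1))) hw
  have split : ∑ x ∈ A ∪ B, w x =
      ∑ x ∈ A \ B, w x + ∑ y ∈ B \ A, w y + ∑ x ∈ A ∩ B, w x := by
    rw [← Finset.sdiff_union_self_eq_union, Finset.sum_union Finset.sdiff_disjoint,
      ← Finset.sum_inter_add_sum_sdiff B A, Finset.inter_comm B A]
    ring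
  rw [Finset.sum_add_distrib]
  lia

end Counting

section Conflict

variable {G : SimpleGraph V} {M : Set (Sym2 V)} {e f : Sym2 V} {u v : V}

theorem Conflict.symm (h : Conflict G e f) : Conflict G f e := by
  obtain ⟨a, ha, b, hb, hab⟩ := h
  exact ⟨b, hb, a, ha, hab.imp Eq.symm SimpleGraph.Adj.symm⟩

theorem Conflict.refl (G : SimpleGraph V) (e : Sym2 V) : Conflict G e e :=
  ⟨e.out.1, e.out_fst_mem, e.out.1, e.out_fst_mem, Or.inl rfl⟩

theorem conflict_mk_iff (huv : G.Adj u v) :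
    Conflict G s(u, v) f ↔ ∃ x ∈ f, G.Adj u x ∨ G.Adj v x := by
  constructor
  · rintro ⟨a, ha, x, hx, h⟩
    refine ⟨x, hx, ?_⟩
    rcases Sym2.mem_iff.1 ha with rfl | rfl <;> rcases h with rfl | h
    exacts [Or.inr huv.symm, Or.inl h, Or.inl huv, Or.inr h]
  · rintro ⟨x, hx, h | h⟩
    exacts [⟨u, by simp, x, hx, Or.inr h⟩, ⟨v, by simp, x, hx, Or.inr h⟩]

theorem mem_PCSet_iff :
    f ∈ PCSet G M e ↔
      f ∈ G.edgeSet ∧ Conflict G e f ∧ ∀ g ∈ M, Conflict G g f → g = e := by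
  simp only [PCSet, CSet, Set.mem_sdiff, Set.mem_iUnion, Set.mem_ofPred_eq, Set.mem_singleton_iff]
  grind

theorem IsMaximalInducedMatching.exists_conflict (hM : IsMaximalInducedMatching G M)
    (hf : f ∈ G.edgeSet) : ∃ e ∈ M, Conflict G e f := by
  by_contra! hfree
  have hinsert : IsInducedMatching G (insert f M) := by
    refine ⟨Set.insert_subset hf hM.1.1, ?_⟩
    rintro a (rfl | ha) b (rfl | hb) hab
    · exact absurd rfl hab
    · exact fun hc ↦ hfree b hb hc.symm
    · exact hfree a ha
    · exact hM.1.2 a ha b hb hab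
  have hfM : f ∈ M := hM.2 _ hinsert (Set.subset_insert f M) ▸ Set.mem_insert f M
  exact hfree f hfM (Conflict.refl G f)

theorem two_mul_ncard_edgeSet_le_sum {M : Finset (Sym2 V)} (hE : G.edgeSet.Finite)
    (hM : ∀ f ∈ G.edgeSet, ∃ e ∈ M, Conflict G e f) :
    2 * G.edgeSet.ncard ≤ ∑ e ∈ M, ((CSet G e).ncard + (PCSet G M e).ncard) := by
  obtain ⟨E, hE⟩ := hE.exists_finset_coe
  have mem_E : ∀ f, f ∈ G.edgeSet ↔ f ∈ E := fun f ↦ by rw [← hE, Finset.mem_coe]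
  let C : Sym2 V → Finset (Sym2 V) := fun e ↦ {f ∈ E | Conflict G e f}
  have CSet_eq : ∀ e, CSet G e = C e := fun e ↦ by
    ext f; simp [CSet, C, mem_E]
  have PCSet_eq : ∀ e, PCSet G M e =
      ({f ∈ C e | True ∧ ∀ g ∈ M, f ∈ C g → g = e} : Finset (Sym2 V)) := fun e ↦ by
    ext f; simp only [mem_PCSet_iff, mem_E, Finset.mem_coe, Finset.mem_filter, C]; grind
  have biUnion_C : M.biUnion C = E := by
    ext f
    simp only [Finset.mem_biUnion, C, Finset.mem_filter]
    exact ⟨fun ⟨_, _, hf, _⟩ ↦ hf, fun hf ↦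
      (hM f ((mem_E f).2 hf)).imp fun _ he ↦ ⟨he.1, hf, he.2⟩⟩
  have count := card_biUnion_add_card_filter_le M C fun _ ↦ True
  rw [biUnion_C, Finset.filter_true, ← two_mul] at count
  simpa only [← hE, CSet_eq, PCSet_eq, Set.ncard_coe_finset] using count

end Conflict

section Exchange

variable {G : SimpleGraph V} {M : Set (Sym2 V)} {u v x y x' y' : V}

theorem IsInducedMatching.mk_mem_PCSet (hM : IsInducedMatching G M) (he : s(u, v) ∈ M)
    (hvx : G.Adj v x) (hxy : s(x, y) ∈ PCSet G M s(u, v)) : s(x, v) ∈ PCSet G M s(u, v) := by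
  rw [mem_PCSet_iff] at hxy ⊢
  refine ⟨hvx.symm, ⟨v, by simp, v, by simp, Or.inl rfl⟩, ?_⟩
  rintro g hg ⟨a, ha, b, hb, hab⟩
  rcases Sym2.mem_iff.1 hb with rfl | rfl
  · exact hxy.2.2 g hg ⟨a, ha, b, by simp, hab⟩
  · by_contra hne
    exact hM.2 g hg _ he hne ⟨a, ha, b, by simp, hab⟩

/-- The private edges `xy` and `x'v` conflict, so if `x` and `x'` were not adjacent, then
`u, x, y, x', v` would be an induced `C₅`. -/
theorem LSStable.adj_of_mem_PCSet (hstab : LSStable G M) (hC5 : C5Free G)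
    (hM : IsInducedMatching G M) (he : s(u, v) ∈ M)
    (hux : G.Adj u x) (hxv : x ≠ v) (hvx : ¬ G.Adj v x)
    (hvx' : G.Adj v x') (hxu' : x' ≠ u) (hux' : ¬ G.Adj u x')
    (huy : ¬ G.Adj u y) (hvy : ¬ G.Adj v y)
    (hxy : s(x, y) ∈ PCSet G M s(u, v)) (hxy' : s(x', y') ∈ PCSet G M s(u, v)) :
    G.Adj x x' := by
  have huv : G.Adj u v := hM.1 he
  have hadj : G.Adj x y := (mem_PCSet_iff.1 hxy).1
  have hyv : y ≠ v := fun h ↦ huy (h ▸ huv)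
  have hne : s(x', v) ≠ s(x, y) := fun h ↦ by
    rcases Sym2.mem_iff.1 (h ▸ Sym2.mem_mk_right x' v) with h | h
    exacts [hxv h.symm, hyv h.symm]
  have hconf : Conflict G s(x', v) s(x, y) :=
    (hstab _ he _ (hM.mk_mem_PCSet he hvx' hxy') _ hxy hne).2
  by_contra hxx'
  have hx'y : G.Adj x' y := by
    obtain ⟨z, hz, hz'⟩ := (conflict_mk_iff hvx'.symm).1 hconf
    rcases Sym2.mem_iff.1 hz with rfl | rfl
    · exact absurd (hz'.resolve_right hvx).symm hxx'
    · exact hz'.resolve_right hvy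
  exact hC5 ⟨u, x, y, x', v, hux, hadj, hx'y.symm, hvx'.symm, huv.symm, huy, hux', hxx',
    fun h ↦ hvx h.symm, fun h ↦ hvy h.symm, fun h ↦ hvy (h ▸ huv.symm), hxu'.symm,
    fun h ↦ hux' (h ▸ hux), hxv, hyv⟩

end Exchange

section LocalBound

variable {G : SimpleGraph V} [G.LocallyFinite] {M : Set (Sym2 V)} {f : Sym2 V} {u v x : V} {n : ℕ}

/-- The vertices other than `u` and `v` that are adjacent to `u` or to `v` (for adjacent `u`, `v`),
the set `A ∪ B` of the counting argument. -/
noncomputable def edgeNeighbors (G : SimpleGraph V) [G.LocallyFinite] (u v : V) : Finset V :=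
  (G.neighborFinset u).erase v ∪ (G.neighborFinset v).erase u

/-- The edges at `u` or at `v`. All of them conflict with `uv`, and they are counted apart from the
other conflicts of `uv`. -/
noncomputable def endEdges (G : SimpleGraph V) [G.LocallyFinite] (u v : V) : Finset (Sym2 V) :=
  G.incidenceFinset u ∪ G.incidenceFinset v

/-- The edges at `x` that avoid both `u` and `v`: what a vertex `x` of `edgeNeighbors G u v` adds to
the conflicts of `uv`. -/
noncomputable def outerEdges (G : SimpleGraph V) [G.LocallyFinite] (u v x : V) : Finset (Sym2 V) :=
  G.incidenceFinset x \ endEdges G u v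

/-- The private conflict edges of `uv` that leave `edgeNeighbors G u v` at `x`, encoded
as belonging to `outerEdges G u v z` for no other such `z`. -/
noncomputable def privateOuterEdges (G : SimpleGraph V) [G.LocallyFinite] (M : Set (Sym2 V))
    (u v x : V) : Finset (Sym2 V) :=
  {f ∈ outerEdges G u v x |
    f ∈ PCSet G M s(u, v) ∧ ∀ z ∈ edgeNeighbors G u v, f ∈ outerEdges G u v z → z = x}

theorem mem_edgeNeighbors :
    x ∈ edgeNeighbors G u v ↔ x ≠ v ∧ G.Adj u x ∨ x ≠ u ∧ G.Adj v x := by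
  simp [edgeNeighbors]

theorem mem_endEdges : f ∈ endEdges G u v ↔ f ∈ G.edgeSet ∧ (u ∈ f ∨ v ∈ f) := by
  simp [endEdges, SimpleGraph.incidenceSet, and_or_left]

theorem mem_outerEdges : f ∈ outerEdges G u v x ↔ f ∈ G.edgeSet ∧ x ∈ f ∧ u ∉ f ∧ v ∉ f := by
  simp only [outerEdges, Finset.mem_sdiff, mem_endEdges, SimpleGraph.mem_incidenceFinset,
    SimpleGraph.incidenceSet, Set.mem_ofPred_eq]
  tauto

theorem CSet_mk_eq (huv : G.Adj u v) :
    CSet G s(u, v) =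
      ↑(endEdges G u v ∪ (edgeNeighbors G u v).biUnion (outerEdges G u v)) := by
  ext f
  simp only [CSet, Set.mem_ofPred_eq, conflict_mk_iff huv, Finset.coe_union, Finset.coe_biUnion,
    Set.mem_union, Finset.mem_coe, Set.mem_iUnion, mem_endEdges, mem_outerEdges, mem_edgeNeighbors,
    exists_prop]
  constructor
  · rintro ⟨hf, x, hx, h⟩
    by_cases hend : u ∈ f ∨ v ∈ f
    · exact Or.inl ⟨hf, hend⟩
    · push Not at hend
      have hxu : x ≠ u := fun h ↦ hend.1 (h ▸ hx)
      have hxv : x ≠ v := fun h ↦ hend.2 (h ▸ hx)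
      exact Or.inr ⟨x, h.imp (⟨hxv, ·⟩) (⟨hxu, ·⟩), hf, hx, hend⟩
  · rintro (⟨hf, hu | hv⟩ | ⟨x, h, hf, hx, -⟩)
    exacts [⟨hf, u, hu, Or.inr huv.symm⟩, ⟨hf, v, hv, Or.inl huv⟩,
      ⟨hf, x, hx, h.imp And.right And.right⟩]

theorem finite_CSet {e : Sym2 V} (he : e ∈ G.edgeSet) : (CSet G e).Finite := by
  induction e using Sym2.ind with
  | _ u v => exact CSet_mk_eq he ▸ Finset.finite_toSet _

theorem card_endEdges_add_one (huv : G.Adj u v) :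
    (endEdges G u v).card + 1 = G.degree u + G.degree v := by
  have hinter : G.incidenceFinset u ∩ G.incidenceFinset v = {s(u, v)} := by
    rw [← Finset.coe_inj]
    simpa using G.incidenceSet_inter_incidenceSet_of_adj huv
  rw [← G.card_incidenceFinset_eq_degree u, ← G.card_incidenceFinset_eq_degree v,
    ← Finset.card_union_add_card_inter, hinter, Finset.card_singleton, endEdges]

theorem card_outerEdges_lt_degree (hx : x ∈ edgeNeighbors G u v) :
    (outerEdges G u v x).card < G.degree x := by
  obtain ⟨z, hz, hzx⟩ : ∃ z, (z = u ∨ z = v) ∧ G.Adj z x := by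
    rcases mem_edgeNeighbors.1 hx with h | h
    exacts [⟨u, Or.inl rfl, h.2⟩, ⟨v, Or.inr rfl, h.2⟩]
  rw [← G.card_incidenceFinset_eq_degree x]
  refine Finset.card_lt_card ((Finset.ssubset_iff_of_subset Finset.sdiff_subset).2
    ⟨s(z, x), ?_, ?_⟩)
  · exact (G.mem_incidenceFinset x _).2 ⟨hzx, Sym2.mem_mk_right z x⟩
  · have hend : s(z, x) ∈ endEdges G u v :=
      mem_endEdges.2 ⟨hzx, by rcases hz with rfl | rfl <;> simp⟩
    exact fun h ↦ (Finset.mem_sdiff.1 h).2 hend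

theorem card_erase_neighborFinset_le (huv : G.Adj u v) (hu : G.degree u ≤ n + 1) :
    ((G.neighborFinset u).erase v).card ≤ n := by
  rw [Finset.card_erase_of_mem ((G.mem_neighborFinset u v).2 huv),
    G.card_neighborFinset_eq_degree]
  lia

theorem exists_of_mem_privateOuterEdges (hf : f ∈ privateOuterEdges G M u v x) :
    ∃ y, ¬ G.Adj u y ∧ ¬ G.Adj v y ∧ s(x, y) ∈ PCSet G M s(u, v) := by
  obtain ⟨hfx, hpriv, hunique⟩ := Finset.mem_filter.1 hf
  obtain ⟨hfG, ⟨y, rfl⟩, hu, hv⟩ := mem_outerEdges.1 hfx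
  have hy : y ∉ edgeNeighbors G u v := fun hy ↦
    (show G.Adj x y from hfG).ne (hunique y hy (mem_outerEdges.2 ⟨hfG, by simp, hu, hv⟩)).symm
  have hyu : y ≠ u := fun h ↦ hu (h ▸ Sym2.mem_mk_right x y)
  have hyv : y ≠ v := fun h ↦ hv (h ▸ Sym2.mem_mk_right x y)
  rw [mem_edgeNeighbors] at hy
  exact ⟨y, fun h ↦ hy (Or.inl ⟨hyv, h⟩), fun h ↦ hy (Or.inr ⟨hyu, h⟩), hpriv⟩

theorem card_privateOuterEdges_add_card_le {S : Finset V}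
    (hx : x ∈ edgeNeighbors G u v) (hS : S ⊆ edgeNeighbors G u v) (hadj : ∀ y ∈ S, G.Adj x y) :
    (privateOuterEdges G M u v x).card + S.card ≤ (outerEdges G u v x).card := by
  have ne_ends : ∀ z ∈ edgeNeighbors G u v, u ≠ z ∧ v ≠ z := fun z hz ↦ by
    rcases mem_edgeNeighbors.1 hz with ⟨hne, h⟩ | ⟨hne, h⟩
    exacts [⟨h.ne, hne.symm⟩, ⟨hne.symm, h.ne⟩]
  have mem_outer : ∀ y ∈ S, ∀ z ∈ s(x, y), s(x, y) ∈ outerEdges G u v z := fun y hy z hz ↦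
    mem_outerEdges.2 ⟨hadj y hy, hz, by simp [ne_ends x hx, ne_ends y (hS hy)]⟩
  have hdisj : Disjoint (privateOuterEdges G M u v x) (S.image (s(x, ·))) := by
    rw [Finset.disjoint_right]
    intro _ hf hpriv
    obtain ⟨y, hy, rfl⟩ := Finset.mem_image.1 hf
    exact (hadj y hy).ne
      ((Finset.mem_filter.1 hpriv).2.2 y (hS hy) (mem_outer y hy y (Sym2.mem_mk_right x y))).symm
  rw [← Finset.card_image_of_injective S fun _ _ ↦ Sym2.congr_right.1,
    ← Finset.card_union_of_disjoint hdisj]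
  refine Finset.card_le_card (Finset.union_subset (Finset.filter_subset _ _) ?_)
  intro _ hf
  obtain ⟨y, hy, rfl⟩ := Finset.mem_image.1 hf
  exact mem_outer y hy x (Sym2.mem_mk_left x y)

theorem ncard_CSet_add_ncard_PCSet_le_sum (huv : G.Adj u v) :
    (CSet G s(u, v)).ncard + (PCSet G M s(u, v)).ncard ≤ 2 * (endEdges G u v).card +
      ∑ x ∈ edgeNeighbors G u v,
        ((outerEdges G u v x).card + (privateOuterEdges G M u v x).card) := by
  set U := (edgeNeighbors G u v).biUnion (outerEdges G u v)
  have hC : (CSet G s(u, v)).ncard ≤ (endEdges G u v).card + U.card := by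
    rw [CSet_mk_eq huv, Set.ncard_coe_finset]
    exact Finset.card_union_le _ _
  have hPC : (PCSet G M s(u, v)).ncard ≤
      (endEdges G u v).card + {f ∈ U | f ∈ PCSet G M s(u, v)}.card := by
    refine le_trans ?_ (Finset.card_union_le _ _)
    rw [← Set.ncard_coe_finset]
    refine Set.ncard_le_ncard (fun f hf ↦ ?_) (Finset.finite_toSet _)
    have hfC : f ∈ endEdges G u v ∪ U := by
      rw [← Finset.mem_coe, ← CSet_mk_eq huv]
      exact hf.1
    simpa [hf] using hfC
  have hU := card_biUnion_add_card_filter_le (edgeNeighbors G u v) (outerEdges G u v)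
    (· ∈ PCSet G M s(u, v))
  simp only [privateOuterEdges]
  lia

theorem LSStable.sum_card_outerEdges_le (hstab : LSStable G M) (hC5 : C5Free G)
    (hM : IsInducedMatching G M) (he : s(u, v) ∈ M) (hdeg : ∀ x, G.degree x ≤ n + 1) :
    ∑ x ∈ edgeNeighbors G u v,
      ((outerEdges G u v x).card + (privateOuterEdges G M u v x).card) ≤ 3 * n ^ 2 := by
  have huv : G.Adj u v := hM.1 he
  have card_outer : ∀ x ∈ edgeNeighbors G u v, (outerEdges G u v x).card ≤ n := fun x hx ↦
    Nat.le_of_lt_succ ((card_outerEdges_lt_degree hx).trans_le (hdeg x))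
  refine sum_union_add_le_three_mul_sq (card_erase_neighborFinset_le huv (hdeg u))
    (card_erase_neighborFinset_le huv.symm (hdeg v))
    (fun x ↦ Finset.card_le_card (Finset.filter_subset _ _)) card_outer fun x hx hpriv ↦ ?_
  have hxW : x ∈ edgeNeighbors G u v := Finset.mem_union_left _ (Finset.mem_sdiff.1 hx).1
  refine (card_privateOuterEdges_add_card_le hxW (fun y hy ↦ ?_) fun y hy ↦ ?_).trans
    (card_outer x hxW)
  · exact Finset.mem_union_right _ (Finset.mem_sdiff.1 (Finset.mem_filter.1 hy).1).1
  · obtain ⟨hyB, hpriv'⟩ := Finset.mem_filter.1 hy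
    obtain ⟨f, hf⟩ := Finset.card_ne_zero.1 hpriv
    obtain ⟨f', hf'⟩ := Finset.card_ne_zero.1 hpriv'
    obtain ⟨z, huz, hvz, hxz⟩ := exists_of_mem_privateOuterEdges hf
    obtain ⟨z', -, -, hyz'⟩ := exists_of_mem_privateOuterEdges hf'
    simp only [Finset.mem_sdiff, Finset.mem_erase, SimpleGraph.mem_neighborFinset,
      not_and] at hx hyB
    exact hstab.adj_of_mem_PCSet hC5 hM he hx.1.2 hx.1.1 (hx.2 hx.1.2.ne') hyB.1.2 hyB.1.1
      (hyB.2 hyB.1.2.ne') huz hvz hxz hyz'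

theorem LSStable.ncard_CSet_add_ncard_PCSet_le {e : Sym2 V} {d : ℕ} (hstab : LSStable G M)
    (hC5 : C5Free G) (hM : IsInducedMatching G M) (he : e ∈ M) (hdeg : ∀ x, G.degree x ≤ d) :
    ((CSet G e).ncard + (PCSet G M e).ncard : ℝ) ≤ 3 * d ^ 2 - 2 * d + 1 := by
  induction e using Sym2.ind with
  | _ u v =>
    have huv : G.Adj u v := hM.1 he
    have hd : 0 < d := ((G.degree_pos_iff_exists_adj u).2 ⟨v, huv⟩).trans_le (hdeg u)
    obtain ⟨n, rfl⟩ : ∃ n, d = n + 1 := Nat.exists_eq_succ_of_ne_zero hd.ne'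
    have hends := card_endEdges_add_one huv
    have hsplit := ncard_CSet_add_ncard_PCSet_le_sum (M := M) huv
    have houter := hstab.sum_card_outerEdges_le hC5 hM he hdeg
    have hu := hdeg u
    have hv := hdeg v
    have hnat : (CSet G s(u, v)).ncard + (PCSet G M s(u, v)).ncard ≤
        2 * (2 * n + 1) + 3 * n ^ 2 := by lia
    have hreal : ((CSet G s(u, v)).ncard + (PCSet G M s(u, v)).ncard : ℝ) ≤
        2 * (2 * n + 1) + 3 * n ^ 2 := by exact_mod_cast hnat
    push_cast
    linarith

theorem finite_edgeSet_of_forall_exists_conflict {M : Finset (Sym2 V)} (hMG : ↑M ⊆ G.edgeSet)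
    (hM : ∀ f ∈ G.edgeSet, ∃ e ∈ M, Conflict G e f) : G.edgeSet.Finite := by
  refine (M.finite_toSet.biUnion fun e he ↦ finite_CSet (hMG he)).subset fun f hf ↦ ?_
  obtain ⟨e, he, hc⟩ := hM f hf
  exact Set.mem_biUnion he ⟨hf, hc⟩

end LocalBound

theorem stmt10_general (G : SimpleGraph V) [G.LocallyFinite] (d : ℕ) (hdeg : ∀ v, G.degree v ≤ d)
    (hC5 : C5Free G) (M : Set (Sym2 V)) (hfin : M.Finite) (hmax : IsMaximalInducedMatching G M)
    (hstab : LSStable G M) :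
    (M.ncard : ℝ) ≥
      (G.edgeSet.ncard : ℝ) / ((3 / 2) * (d : ℝ) ^ 2 - (d : ℝ) + 1 / 2) := by
  lift M to Finset (Sym2 V) using hfin
  have hdom : ∀ f ∈ G.edgeSet, ∃ e ∈ M, Conflict G e f := fun f hf ↦ hmax.exists_conflict hf
  have hcount : (2 : ℝ) * G.edgeSet.ncard ≤
      ∑ e ∈ M, ((CSet G e).ncard + (PCSet G M e).ncard : ℝ) := by
    exact_mod_cast two_mul_ncard_edgeSet_le_sum
      (finite_edgeSet_of_forall_exists_conflict hmax.1.1 hdom) hdom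
  have hlocal : ∑ e ∈ M, ((CSet G e).ncard + (PCSet G M e).ncard : ℝ) ≤
      M.card * (3 * (d : ℝ) ^ 2 - 2 * d + 1) := by
    rw [← nsmul_eq_mul]
    exact Finset.sum_le_card_nsmul _ _ _ fun e he ↦
      hstab.ncard_CSet_add_ncard_PCSet_le hC5 hmax.1 he hdeg
  have hpos : (0 : ℝ) < (3 / 2) * d ^ 2 - d + 1 / 2 := by nlinarith [sq_nonneg ((d : ℝ) - 1)]
  rw [ge_iff_le, div_le_iff₀ hpos, Set.ncard_coe_finset]
  linarith

/-- lower bound for locally optimal induced matchings in `C₅`-free graphs. -/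
theorem stmt10 [Fintype V] (G : SimpleGraph V) (d : ℕ) (hd : 3 ≤ d)
    (hΔ : ∀ v : V, (G.neighborSet v).ncard ≤ d) (hC5 : C5Free G)
    (M : Set (Sym2 V)) (hmax : IsMaximalInducedMatching G M) (hstab : LSStable G M) :
    (M.ncard : ℝ) ≥
      (G.edgeSet.ncard : ℝ) / ((3 / 2) * (d : ℝ) ^ 2 - (d : ℝ) + 1 / 2) := by
  have hdeg : ∀ v, G.degree v ≤ d := fun v ↦ by
    simpa only [← G.card_neighborSet_eq_degree, Set.fintypeCard_eq_ncard] using hΔ v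
  exact stmt10_general G d hdeg hC5 M M.toFinite hmax hstab
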